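/- Let U, W be k-subspaces of V. If U* ⊆ W then p_U p_W = p_{U ∩ W}. Moreover, for arbitrary U, W, the product p_U p_W lies in the interval [t⁻¹·id, id] of PPU(b) (with respect to the right-invariant order with negative cone PPU(b)⁻) if and only if U* ⊆ W. -/

import Mathlib

open Finsupp

variable (k : Type*) [Field k] (V : Type*) [AddCommGroup V] [Module k V]

/-- Multiplication by `t^n` on `V[t,t⁻¹] := ℤ →₀ V` (writing `v = ∑ᵢ tⁱ vᵢ` as the
finitely supported function `i ↦ vᵢ`). -/
noncomputable def shift (n : ℤ) : (ℤ →₀ V) ≃ₗ[k] (ℤ →₀ V) :=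
  Finsupp.domLCongr (Equiv.addRight n)

/-- The coefficient of `tⁿ` of `b̃(v,w) = ∑ₙ tⁿ (∑ᵢ b(v_{i-n}, w_i))`. -/
noncomputable def Btilde (b : LinearMap.BilinForm k V) (n : ℤ) (v w : ℤ →₀ V) : k :=
  w.sum fun i wi => b (v (i - n)) wi

/-- `φ` is a paraunitary transformation: an invertible `k[t,t⁻¹]`-linear
(i.e. `k`-linear and commuting with multiplication by `t`) endomorphism of
`V[t,t⁻¹]` preserving `b̃`. -/
def IsPU (b : LinearMap.BilinForm k V) (φ : (ℤ →₀ V) ≃ₗ[k] (ℤ →₀ V)) : Prop :=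
  (∀ v, φ (shift k V 1 v) = shift k V 1 (φ v)) ∧
  ∀ (n : ℤ) (v w : ℤ →₀ V), Btilde k V b n (φ v) (φ w) = Btilde k V b n v w

/-- The specialization `t = 1` of a `k[t,t⁻¹]`-linear endomorphism `f = ∑ᵢ tⁱ fᵢ`
of `V[t,t⁻¹]`, i.e. the endomorphism `ε₁(f) = ∑ᵢ fᵢ` of `V`. -/
noncomputable def eps (f : (ℤ →₀ V) →ₗ[k] (ℤ →₀ V)) : V →ₗ[k] V :=
  (Finsupp.lsum k fun _ : ℤ => (LinearMap.id : V →ₗ[k] V)) ∘ₗ f ∘ₗ Finsupp.lsingle 0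

/-- `φ` is pure paraunitary: paraunitary and specializing to the identity at `t = 1`. -/
def IsPPU (b : LinearMap.BilinForm k V) (φ : (ℤ →₀ V) ≃ₗ[k] (ℤ →₀ V)) : Prop :=
  IsPU k V b φ ∧ eps k V (φ : (ℤ →₀ V) →ₗ[k] (ℤ →₀ V)) = LinearMap.id

/-- `φ ∈ PPU(b)⁻`: pure paraunitary and all Laurent coefficients `φᵢ` for `i > 0` vanish. -/
def PPUneg (b : LinearMap.BilinForm k V) (φ : (ℤ →₀ V) ≃ₗ[k] (ℤ →₀ V)) : Prop :=
  IsPPU k V b φ ∧ ∀ (x : V) (i : ℤ), 0 < i → φ (Finsupp.single 0 x) i = 0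

/-- The orthogonal complement `U* = {v ∈ V | b(u,v) = 0 for all u ∈ U}`. -/
def orthoC (b : LinearMap.BilinForm k V) (U : Submodule k V) : Submodule k V where
  carrier := {v | ∀ u ∈ U, b u v = 0}
  add_mem' := by
    intro a c ha hc u hu
    simp only [Set.mem_setOf_eq] at *
    rw [map_add, ha u hu, hc u hu, add_zero]
  zero_mem' := by intro u _; simp
  smul_mem' := by
    intro c x hx u hu
    simp only [Set.mem_setOf_eq] at *
    rw [map_smul, hx u hu, smul_zero]

/-- The endomorphism `p_U = t⁻¹ π_{U*} + π_U` of `V[t,t⁻¹]`, where `π` is the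
projection of `V` onto `U` along `U*` (so that `π_{U*} = 1 - π`). -/
noncomputable def pULin (π : V →ₗ[k] V) : (ℤ →₀ V) →ₗ[k] (ℤ →₀ V) :=
  (shift k V (-1)).toLinearMap ∘ₗ Finsupp.mapRange.linearMap (LinearMap.id - π) +
    Finsupp.mapRange.linearMap π

/- Write `q_S := p_{S*} = t⁻¹ π_S + π_{S*}`. Since `q_S p_S = t⁻¹`, one has `p_S⁻¹ = t q_S`, hence
`t⁻¹ (p_U p_W)⁻¹ = t q_W q_U`, whose only coefficient in positive degree is `π_{W*} π_{U*}`. It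
vanishes exactly when the range `U*` of `π_{U*}` lies in the kernel `W` of `π_{W*}`. By duality
this also says `W* ⊆ U`, i.e. `π_{U*} π_{W*} = 0`, so the `t⁻²` term of `p_U p_W` vanishes and
`p_U p_W` is the `p_{U ∩ W}` belonging to the orthogonal projection `π_U π_W`. -/

section

variable {k V} {b : LinearMap.BilinForm k V}

theorem orthoC_eq_orthogonal (S : Submodule k V) : orthoC k V b S = b.orthogonal S :=
  rfl

/-- `π` is an orthogonal projection onto `S`: every `v` decomposes as `π v ∈ S` plus
`v - π v ∈ S*`. Idempotency is not part of the definition; it follows when `b` is nondegenerate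
(`IsOrthoProj.isProj`). -/
def IsOrthoProj (b : LinearMap.BilinForm k V) (S : Submodule k V) (π : V →ₗ[k] V) : Prop :=
  ∀ v, π v ∈ S ∧ v - π v ∈ orthoC k V b S

namespace IsOrthoProj

variable {S U W : Submodule k V} {π π' πU πW : V →ₗ[k] V}

theorem apply_sub_apply_eq_zero (hπ : IsOrthoProj b S π) (x y : V) : b (π x) (y - π y) = 0 :=
  (hπ y).2 _ (hπ x).1

theorem compl (hπ : IsOrthoProj b S π) (hb : b.IsRefl) :
    IsOrthoProj b (orthoC k V b S) (LinearMap.id - π) := fun v ↦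
  ⟨(hπ v).2, by
    simpa only [orthoC_eq_orthogonal, LinearMap.sub_apply, LinearMap.id_apply, sub_sub_cancel]
      using LinearMap.BilinForm.le_orthogonal_orthogonal hb (hπ v).1⟩

theorem comp (hU : IsOrthoProj b U πU) (hW : IsOrthoProj b W πW) (hUW : orthoC k V b U ≤ W) :
    IsOrthoProj b (U ⊓ W) (πU ∘ₗ πW) := by
  intro v
  have mem_W : πU (πW v) ∈ W := by
    simpa using W.sub_mem (hW v).1 (hUW (hU (πW v)).2)
  refine ⟨⟨(hU _).1, mem_W⟩, fun u hu ↦ ?_⟩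
  calc b u (v - πU (πW v)) = b u (v - πW v) + b u (πW v - πU (πW v)) := by
        rw [← map_add, sub_add_sub_cancel]
    _ = 0 := by rw [(hW v).2 u hu.2, (hU _).2 u hu.1, add_zero]

theorem disjoint_orthoC (hπ : IsOrthoProj b S π) (hb : b.IsRefl) (hsep : b.SeparatingLeft) :
    Disjoint S (orthoC k V b S) := by
  refine Submodule.disjoint_def.mpr fun x hxS hxS' ↦ hsep x fun y ↦ ?_
  calc b x y = b x (π y) + b x (y - π y) := by rw [← map_add, add_sub_cancel]
    _ = 0 := by rw [hb _ _ (hxS' _ (hπ y).1), (hπ y).2 x hxS, add_zero]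

theorem unique (hπ : IsOrthoProj b S π) (hπ' : IsOrthoProj b S π') (hb : b.IsRefl)
    (hsep : b.SeparatingLeft) : π = π' := by
  ext x
  have mem_orthoC : π x - π' x ∈ orthoC k V b S := by
    simpa using (orthoC k V b S).sub_mem (hπ' x).2 (hπ x).2
  exact sub_eq_zero.mp <| Submodule.disjoint_def.mp (hπ.disjoint_orthoC hb hsep) _
    (S.sub_mem (hπ x).1 (hπ' x).1) mem_orthoC

theorem isProj (hπ : IsOrthoProj b S π) (hb : b.IsRefl) (hsep : b.SeparatingLeft) :
    LinearMap.IsProj S π where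
  map_mem x := (hπ x).1
  map_id x hx := (sub_eq_zero.mp <| Submodule.disjoint_def.mp (hπ.disjoint_orthoC hb hsep) _
    (S.sub_mem hx (hπ x).1) (hπ x).2).symm

theorem orthoC_orthoC (hπ : IsOrthoProj b S π) (hb : b.IsRefl) (hsep : b.SeparatingLeft) :
    orthoC k V b (orthoC k V b S) = S := by
  have hπ'' := (hπ.compl hb).compl hb
  rw [sub_sub_cancel] at hπ''
  rw [← (hπ''.isProj hb hsep).range, (hπ.isProj hb hsep).range]

theorem orthoC_le_of_orthoC_le (hU : IsOrthoProj b U πU) (hb : b.IsRefl)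
    (hsep : b.SeparatingLeft) (hUW : orthoC k V b U ≤ W) : orthoC k V b W ≤ U :=
  calc orthoC k V b W ≤ orthoC k V b (orthoC k V b U) := by
        simpa only [orthoC_eq_orthogonal] using LinearMap.BilinForm.orthogonal_le hUW
    _ = U := hU.orthoC_orthoC hb hsep

theorem id_sub_comp_id_sub_eq_zero_iff (hU : IsOrthoProj b U πU) (hW : IsOrthoProj b W πW)
    (hb : b.IsRefl) (hsep : b.SeparatingLeft) :
    (LinearMap.id - πU) ∘ₗ (LinearMap.id - πW) = 0 ↔ orthoC k V b W ≤ U := by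
  have ker_eq : LinearMap.ker (LinearMap.id - πU) = U := by
    ext x
    rw [LinearMap.mem_ker, LinearMap.sub_apply, LinearMap.id_apply, sub_eq_zero, eq_comm,
      (hU.isProj hb hsep).mem_iff_map_id]
  rw [← LinearMap.range_le_ker_iff, ((hW.compl hb).isProj hb hsep).range, ker_eq]

end IsOrthoProj

theorem shift_single (n i : ℤ) (x : V) : shift k V n (single i x) = single (i + n) x := by
  simp [shift]

theorem shift_neg_shift (n : ℤ) (v : ℤ →₀ V) : shift k V (-n) (shift k V n v) = v := by
  induction v using Finsupp.induction_linear with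
  | zero => simp only [map_zero]
  | add v w hv hw => simp only [map_add, hv, hw]
  | single i x => rw [shift_single, shift_single, add_neg_cancel_right]

theorem Btilde_single_single (n i j : ℤ) (x y : V) :
    Btilde k V b n (single i x) (single j y) = if i = j - n then b x y else 0 := by
  rw [Btilde, sum_single_index (by simp), single_apply]
  split_ifs <;> simp

theorem Btilde_add_left (n : ℤ) (u v w : ℤ →₀ V) :
    Btilde k V b n (u + v) w = Btilde k V b n u w + Btilde k V b n v w := by
  simp [Btilde, sum_add]

theorem Btilde_add_right (n : ℤ) (u v w : ℤ →₀ V) :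
    Btilde k V b n u (v + w) = Btilde k V b n u v + Btilde k V b n u w :=
  sum_add_index' (fun _ ↦ map_zero _) fun _ ↦ map_add _

theorem Btilde_map_map_of_single (n : ℤ) (f : (ℤ →₀ V) →ₗ[k] (ℤ →₀ V))
    (hf : ∀ i x j y, Btilde k V b n (f (single i x)) (f (single j y)) =
      Btilde k V b n (single i x) (single j y)) (v w : ℤ →₀ V) :
    Btilde k V b n (f v) (f w) = Btilde k V b n v w := by
  induction v using Finsupp.induction_linear with
  | zero => simp [Btilde]
  | add v v' hv hv' => rw [map_add, Btilde_add_left, Btilde_add_left, hv, hv']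
  | single i x =>
    induction w using Finsupp.induction_linear with
    | zero => simp [Btilde]
    | add w w' hw hw' => rw [map_add, Btilde_add_right, Btilde_add_right, hw, hw']
    | single j y => exact hf i x j y

theorem pULin_single (π : V →ₗ[k] V) (i : ℤ) (x : V) :
    pULin k V π (single i x) = single (i - 1) (x - π x) + single i (π x) := by
  simp [pULin, shift_single, sub_eq_add_neg]

theorem pULin_shift (π : V →ₗ[k] V) (n : ℤ) (v : ℤ →₀ V) :
    pULin k V π (shift k V n v) = shift k V n (pULin k V π v) := by
  induction v using Finsupp.induction_linear with
  | zero => simp only [map_zero]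
  | add v w hv hw => simp only [map_add, hv, hw]
  | single i x => simp only [pULin_single, shift_single, map_add, sub_add_eq_add_sub]

theorem eps_pULin (π : V →ₗ[k] V) : eps k V (pULin k V π) = LinearMap.id := by
  ext x
  simp only [eps, LinearMap.comp_apply, lsingle_apply, pULin_single, map_add, lsum_single,
    LinearMap.id_apply, sub_add_cancel]

theorem pULin_pULin_single_apply_self (A B : V →ₗ[k] V) (i : ℤ) (x : V) :
    pULin k V A (pULin k V B (single i x)) i = A (B x) := by
  simp [pULin_single, sub_sub]

theorem pULin_comp_pULin_of_id_sub_comp_eq_zero {A B : V →ₗ[k] V}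
    (h : (LinearMap.id - A) ∘ₗ (LinearMap.id - B) = 0) :
    pULin k V A ∘ₗ pULin k V B = pULin k V (A ∘ₗ B) := by
  have A_sub (x : V) : A (x - B x) = x - B x :=
    (sub_eq_zero.mp (LinearMap.congr_fun h x)).symm
  refine lhom_ext fun i x ↦ ?_
  simp only [LinearMap.comp_apply, pULin_single, map_add, A_sub, sub_self, single_zero, zero_add]
  rw [← add_assoc, ← single_add, sub_add_sub_cancel]

theorem pULin_id_sub_pULin {π : V →ₗ[k] V} (hπ : IsIdempotentElem π) (v : ℤ →₀ V) :
    pULin k V (LinearMap.id - π) (pULin k V π v) = shift k V (-1) v := by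
  have π_π (x : V) : π (π x) = π x := LinearMap.congr_fun hπ x
  induction v using Finsupp.induction_linear with
  | zero => simp only [map_zero]
  | add v w hv hw => simp only [map_add, hv, hw]
  | single i x =>
    simp [pULin_single, shift_single, π_π, ← single_add, sub_eq_add_neg]

theorem inv_apply_of_coe_eq_pULin {π : V →ₗ[k] V} (hπ : IsIdempotentElem π)
    {φ : (ℤ →₀ V) ≃ₗ[k] (ℤ →₀ V)} (hφ : (φ : (ℤ →₀ V) →ₗ[k] (ℤ →₀ V)) = pULin k V π)
    (v : ℤ →₀ V) : φ⁻¹ v = shift k V 1 (pULin k V (LinearMap.id - π) v) := by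
  obtain ⟨u, rfl⟩ := φ.surjective v
  have φ_u : φ u = pULin k V π u := LinearMap.congr_fun hφ u
  calc φ⁻¹ (φ u) = u := φ.symm_apply_apply u
    _ = shift k V 1 (shift k V (-1) u) := by simpa using (shift_neg_shift (-1) u).symm
    _ = _ := by rw [φ_u, pULin_id_sub_pULin hπ]

theorem shift_neg_one_mul_inv_eq_pULin {π : V →ₗ[k] V} (hπ : IsIdempotentElem π)
    {φ : (ℤ →₀ V) ≃ₗ[k] (ℤ →₀ V)} (hφ : (φ : (ℤ →₀ V) →ₗ[k] (ℤ →₀ V)) = pULin k V π) :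
    ((shift k V (-1) * φ⁻¹ : (ℤ →₀ V) ≃ₗ[k] (ℤ →₀ V)) : (ℤ →₀ V) →ₗ[k] (ℤ →₀ V)) =
      pULin k V (LinearMap.id - π) := by
  refine LinearMap.ext fun v ↦ ?_
  rw [LinearEquiv.coe_coe, LinearEquiv.mul_apply, inv_apply_of_coe_eq_pULin hπ hφ,
    shift_neg_shift]

theorem shift_neg_one_mul_inv_single_apply_one {πU πW : V →ₗ[k] V} (hU : IsIdempotentElem πU)
    (hW : IsIdempotentElem πW) {pU pW : (ℤ →₀ V) ≃ₗ[k] (ℤ →₀ V)}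
    (hpU : (pU : (ℤ →₀ V) →ₗ[k] (ℤ →₀ V)) = pULin k V πU)
    (hpW : (pW : (ℤ →₀ V) →ₗ[k] (ℤ →₀ V)) = pULin k V πW) (x : V) :
    (shift k V (-1) * (pU * pW)⁻¹) (single 0 x) 1 =
      ((LinearMap.id - πW) ∘ₗ (LinearMap.id - πU)) x := by
  rw [mul_inv_rev, LinearEquiv.mul_apply, LinearEquiv.mul_apply,
    inv_apply_of_coe_eq_pULin hU hpU, inv_apply_of_coe_eq_pULin hW hpW, shift_neg_shift,
    ← pULin_shift, shift_single, zero_add, pULin_pULin_single_apply_self,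
    LinearMap.comp_apply]

namespace IsOrthoProj

variable {S U W : Submodule k V} {π πU πW : V →ₗ[k] V}

theorem Btilde_pULin (hπ : IsOrthoProj b S π) (hb : b.IsRefl) (n : ℤ) (v w : ℤ →₀ V) :
    Btilde k V b n (pULin k V π v) (pULin k V π w) = Btilde k V b n v w := by
  refine Btilde_map_map_of_single n _ (fun i x j y ↦ ?_) v w
  have cross (x y : V) : b (π x) (y - π y) = 0 := hπ.apply_sub_apply_eq_zero x y
  have cross' (x y : V) : b (x - π x) (π y) = 0 := hb _ _ (cross y x)
  have pythagoras : b (x - π x) (y - π y) + b (π x) (π y) = b x y :=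
    calc _ = b (x - π x + π x) (y - π y + π y) := by
          simp only [map_add, LinearMap.add_apply, cross, cross', add_zero, zero_add]
      _ = b x y := by rw [sub_add_cancel, sub_add_cancel]
  have index_iff : i - 1 = j - 1 - n ↔ i = j - n := by lia
  simp only [pULin_single, Btilde_add_left, Btilde_add_right, Btilde_single_single, cross, cross',
    ite_self, add_zero, zero_add, index_iff]
  split_ifs
  exacts [pythagoras, add_zero 0]

theorem PPUneg_of_coe_eq_pULin (hπ : IsOrthoProj b S π) (hb : b.IsRefl)
    {φ : (ℤ →₀ V) ≃ₗ[k] (ℤ →₀ V)} (hφ : (φ : (ℤ →₀ V) →ₗ[k] (ℤ →₀ V)) = pULin k V π) :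
    PPUneg k V b φ := by
  have φ_apply (v : ℤ →₀ V) : φ v = pULin k V π v := LinearMap.congr_fun hφ v
  refine ⟨⟨⟨fun v ↦ ?_, fun n v w ↦ ?_⟩, ?_⟩, fun x i hi ↦ ?_⟩
  · rw [φ_apply, φ_apply, pULin_shift]
  · rw [φ_apply, φ_apply, hπ.Btilde_pULin hb]
  · rw [hφ, eps_pULin]
  · rw [φ_apply, pULin_single, Finsupp.add_apply, single_eq_of_ne (by lia),
      single_eq_of_ne (by lia), add_zero]

theorem pULin_comp_pULin (hU : IsOrthoProj b U πU) (hW : IsOrthoProj b W πW) (hb : b.IsRefl)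
    (hsep : b.SeparatingLeft) (hUW : orthoC k V b U ≤ W) :
    pULin k V πU ∘ₗ pULin k V πW = pULin k V (πU ∘ₗ πW) :=
  pULin_comp_pULin_of_id_sub_comp_eq_zero <|
    (hU.id_sub_comp_id_sub_eq_zero_iff hW hb hsep).mpr <| hU.orthoC_le_of_orthoC_le hb hsep hUW

theorem PPUneg_mul_iff_orthoC_le (hU : IsOrthoProj b U πU) (hW : IsOrthoProj b W πW)
    (hb : b.IsRefl) (hsep : b.SeparatingLeft) {pU pW : (ℤ →₀ V) ≃ₗ[k] (ℤ →₀ V)}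
    (hpU : (pU : (ℤ →₀ V) →ₗ[k] (ℤ →₀ V)) = pULin k V πU)
    (hpW : (pW : (ℤ →₀ V) →ₗ[k] (ℤ →₀ V)) = pULin k V πW) :
    (PPUneg k V b (shift k V (-1) * (pU * pW)⁻¹) ∧ PPUneg k V b (pU * pW)) ↔
      orthoC k V b U ≤ W := by
  constructor
  · rintro ⟨⟨-, coeff_eq_zero⟩, -⟩
    rw [← hW.id_sub_comp_id_sub_eq_zero_iff hU hb hsep]
    ext x
    rw [← shift_neg_one_mul_inv_single_apply_one
      (hU.isProj hb hsep).isIdempotentElem (hW.isProj hb hsep).isIdempotentElem hpU hpW,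
      coeff_eq_zero x 1 one_pos, LinearMap.zero_apply]
  · intro hUW
    have hπ : IsOrthoProj b (U ⊓ W) (πU ∘ₗ πW) := hU.comp hW hUW
    have hp : ((pU * pW : (ℤ →₀ V) ≃ₗ[k] (ℤ →₀ V)) : (ℤ →₀ V) →ₗ[k] (ℤ →₀ V)) =
        pULin k V (πU ∘ₗ πW) := by
      rw [← hU.pULin_comp_pULin hW hb hsep hUW, ← hpU, ← hpW]
      rfl
    exact ⟨(hπ.compl hb).PPUneg_of_coe_eq_pULin hb <|
        shift_neg_one_mul_inv_eq_pULin (hπ.isProj hb hsep).isIdempotentElem hp,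
      hπ.PPUneg_of_coe_eq_pULin hb hp⟩

end IsOrthoProj

theorem stmt17_general (hb : b.IsRefl) (hsep : b.SeparatingLeft) {U W : Submodule k V}
    {πU πW : V →ₗ[k] V} (hU : IsOrthoProj b U πU) (hW : IsOrthoProj b W πW) :
    (orthoC k V b U ≤ W → ∀ πI, IsOrthoProj b (U ⊓ W) πI →
      pULin k V πU ∘ₗ pULin k V πW = pULin k V πI) ∧
    (∀ pU pW : (ℤ →₀ V) ≃ₗ[k] (ℤ →₀ V),
      (pU : (ℤ →₀ V) →ₗ[k] (ℤ →₀ V)) = pULin k V πU →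
      (pW : (ℤ →₀ V) →ₗ[k] (ℤ →₀ V)) = pULin k V πW →
      ((PPUneg k V b (shift k V (-1) * (pU * pW)⁻¹) ∧ PPUneg k V b (pU * pW)) ↔
        orthoC k V b U ≤ W)) := by
  refine ⟨fun hUW πI hI ↦ ?_, fun pU pW ↦ hU.PPUneg_mul_iff_orthoC_le hW hb hsep⟩
  rw [hU.pULin_comp_pULin hW hb hsep hUW, (hU.comp hW hUW).unique hI hb hsep]

end

/-- If `U* ⊆ W` then `p_U p_W = p_{U ∩ W}`; and for arbitrary
subspaces `U, W`, the product `p_U p_W` lies in the interval `[t⁻¹·id, id]` of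
`PPU(b)` if and only if `U* ⊆ W`. -/
theorem stmt17 [FiniteDimensional k V] (b : LinearMap.BilinForm k V)
    (hsymm : ∀ v w : V, b v w = b w v)
    (haniso : ∀ v : V, b v v = 0 → v = 0)
    (U W : Submodule k V) (πU πW πI : V →ₗ[k] V)
    (hπU : ∀ v : V, πU v ∈ U ∧ v - πU v ∈ orthoC k V b U)
    (hπW : ∀ v : V, πW v ∈ W ∧ v - πW v ∈ orthoC k V b W)
    (hπI : ∀ v : V, πI v ∈ U ⊓ W ∧ v - πI v ∈ orthoC k V b (U ⊓ W)) :
    (orthoC k V b U ≤ W → pULin k V πU ∘ₗ pULin k V πW = pULin k V πI) ∧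
    (∀ pU pW : (ℤ →₀ V) ≃ₗ[k] (ℤ →₀ V),
      (pU : (ℤ →₀ V) →ₗ[k] (ℤ →₀ V)) = pULin k V πU →
      (pW : (ℤ →₀ V) →ₗ[k] (ℤ →₀ V)) = pULin k V πW →
      ((PPUneg k V b (shift k V (-1) * (pU * pW)⁻¹) ∧ PPUneg k V b (pU * pW)) ↔
        orthoC k V b U ≤ W)) := by
  have general := stmt17_general (fun v w h ↦ (hsymm w v).trans h)
    (fun v hv ↦ haniso v (hv v)) hπU hπW
  exact ⟨fun hUW ↦ general.1 hUW πI hπI, general.2⟩
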